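/- For every ε > 0 there exist a number of agents n, finite response spaces X_j each containing an opt-out value ⊥, an ε-differentially private mechanism M, a post-processing function f : O → C with C finite, an agent j, an environment x₋ⱼ, and a hyperreal-valued utility function u : C → ℝ* (the hyperreal numbers) such that for every real reward r ∈ ℝ and every response a ∈ X_j with a ≠ ⊥: (r : ℝ*) + Σ_{c∈C} u(c)·(P(f(M(a, x₋ⱼ)) = c) : ℝ*) < Σ_{c∈C} u(c)·(P(f(M(⊥, x₋ⱼ)) = c) : ℝ*). In particular, no real-valued payment scheme can induce agent j to participate. -/

import Mathlib

open scoped ENNReal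

/-- Two inputs of a product space are neighboring if they differ in exactly one coordinate. -/
def Neighboring {n : ℕ} {X : Fin n → Type*} (x x' : ∀ j, X j) : Prop :=
  ∃ j : Fin n, x j ≠ x' j ∧ ∀ i : Fin n, i ≠ j → x i = x' i

/-- `M` satisfies `(ε,δ)`-differential privacy. -/
def IsDP {n : ℕ} {X : Fin n → Type*} {O : Type*}
    (M : (∀ j, X j) → PMF O) (ε δ : ℝ) : Prop :=
  ∀ x x' : ∀ j, X j, Neighboring x x' → ∀ S : Set O,
    (M x).toOuterMeasure S ≤
      ENNReal.ofReal (Real.exp ε) * (M x').toOuterMeasure S + ENNReal.ofReal δ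

/-- Randomized response probabilities: report the true bit with probability `e^ε/(1+e^ε)`. -/
noncomputable def rrProb (ε : ℝ) (a b : Bool) : ℝ :=
  if a = b then Real.exp ε / (1 + Real.exp ε) else 1 / (1 + Real.exp ε)

lemma rrProb_nonneg (ε : ℝ) (a b : Bool) : 0 ≤ rrProb ε a b := by
  unfold rrProb
  split_ifs <;> positivity

lemma rrProb_le (ε : ℝ) (hε : 0 < ε) (a a' b : Bool) :
    rrProb ε a b ≤ Real.exp ε * rrProb ε a' b := by
  have h1 : 1 < Real.exp ε := Real.one_lt_exp_iff.mpr hε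
  unfold rrProb
  split_ifs <;> rw [← mul_div_assoc] <;> gcongr <;> nlinarith

/-- The randomized response mechanism. -/
noncomputable def rrPMF (ε : ℝ) (a : Bool) : PMF Bool :=
  PMF.ofFintype (fun b => ENNReal.ofReal (rrProb ε a b)) (by
    rw [← ENNReal.ofReal_sum_of_nonneg (fun b _ => rrProb_nonneg ε a b), ← ENNReal.ofReal_one]
    congr 1
    have : 1 + Real.exp ε ≠ 0 := by positivity
    cases a <;> simp [rrProb] <;> field_simp <;> ring)

lemma rrPMF_apply (ε : ℝ) (a b : Bool) : rrPMF ε a b = ENNReal.ofReal (rrProb ε a b) := rfl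

lemma rrPMF_toReal (ε : ℝ) (a b : Bool) : (rrPMF ε a b).toReal = rrProb ε a b := by
  rw [rrPMF_apply, ENNReal.toReal_ofReal (rrProb_nonneg ε a b)]

lemma rr_isDP (ε : ℝ) (hε : 0 < ε) :
    IsDP (n := 1) (X := fun _ => Bool) (fun x => rrPMF ε (x 0)) ε 0 := by
  intro x x' _ S
  rw [ENNReal.ofReal_zero, add_zero, PMF.toOuterMeasure_apply, PMF.toOuterMeasure_apply,
    ← ENNReal.tsum_mul_left]
  refine ENNReal.tsum_le_tsum fun b => ?_
  by_cases hb : b ∈ S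
  · rw [Set.indicator_of_mem hb, Set.indicator_of_mem hb, rrPMF_apply, rrPMF_apply,
      ← ENNReal.ofReal_mul (Real.exp_pos ε).le]
    exact ENNReal.ofReal_le_ofReal (rrProb_le ε hε _ _ _)
  · simp [hb]

/-- for every `ε > 0` there exist a number of agents `n`, finite response
spaces `X j` each with an opt-out value `bot j`, an `ε`-DP mechanism `M`, a post-processor
`f` into a finite consequence space, an agent `j`, an environment (encoded by `x`), and a
hyperreal-valued utility function `u : C → ℝ*` such that for every real reward `r` and
every non-opt-out report `a`, the reward plus the expected hyperreal utility of reporting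
`a` is strictly less than the expected hyperreal utility of opting out: no real-valued
payment scheme can induce participation. -/
theorem stmt11 (ε : ℝ) (hε : 0 < ε) :
    ∃ (n : ℕ) (X : Fin n → Type) (_ : ∀ j, Fintype (X j)) (bot : ∀ j, X j)
      (O : Type) (M : (∀ j, X j) → PMF O)
      (C : Type) (instC : Fintype C) (f : O → C) (u : C → Hyperreal)
      (j : Fin n) (x : ∀ i, X i),
      IsDP M ε 0 ∧
      ∀ (r : ℝ) (a : X j), a ≠ bot j →
        (r : Hyperreal) + ∑ c ∈ @Finset.univ C instC,
            u c * ((((M (Function.update x j a)).map f) c).toReal : Hyperreal) <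
          ∑ c ∈ @Finset.univ C instC,
            u c * ((((M (Function.update x j (bot j))).map f) c).toReal : Hyperreal) := by
  refine ⟨1, fun _ => Bool, fun _ => inferInstance, fun _ => false, Bool,
    fun x => rrPMF ε (x 0), Bool, inferInstance, id,
    fun c => if c then -Hyperreal.omega else 0, 0, fun _ => false, rr_isDP ε hε, ?_⟩
  intro r a ha
  have ha' : a = true := by simpa using ha
  subst ha'
  have hd : 0 < rrProb ε true true - rrProb ε false true := by
    have h1 : 1 < Real.exp ε := Real.one_lt_exp_iff.mpr hε
    simp only [rrProb, if_true, Bool.false_eq_true, if_false]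
    rw [← sub_div]
    apply div_pos <;> linarith
  have h := Hyperreal.coe_lt_omega (r / (rrProb ε true true - rrProb ε false true))
  rw [Hyperreal.coe_div, div_lt_iff₀ (Hyperreal.coe_pos.mpr hd), Hyperreal.coe_sub] at h
  simp only [PMF.map_id, Function.update_self, rrPMF_toReal, Fintype.sum_bool, if_true,
    Bool.false_eq_true, if_false, zero_mul, add_zero]
  linarith
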